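/- Let m ∈ ℕ with m ≥ 1 and let A ⊆ ℕ^m. Then the following are equivalent: (1) there exist functions α₁,…,α_m : 𝒫_f(ℕ^ℕ) → ℕ and H₁,…,H_m : 𝒫_f(ℕ^ℕ) → 𝒫_f(ℕ) such that (a) whenever F, G ∈ 𝒫_f(ℕ^ℕ) and F ⊊ G one has max H_j(F) < min H_j(G) for every j ∈ {1,…,m}, and (b) whenever G₁ ⊊ G₂ ⊊ ⋯ ⊊ G_n ⊊ ⋯ is an infinite strictly increasing chain in 𝒫_f(ℕ^ℕ), f_i ∈ G_i for each i ∈ ℕ, and β₁ < β₂ < ⋯ < β_m are in 𝒫_f(ℕ), the tuple (Σ_{i∈β₁}(α₁(G_i)+Σ_{t∈H₁(G_i)}f_i(t)), …, Σ_{i∈β_m}(α_m(G_i)+Σ_{t∈H_m(G_i)}f_i(t))) belongs to A; (2) there exist idempotent ultrafilters p₁,…,p_m ∈ 𝒥 such that A ∈ ⊗_{i=1}^m p_i. -/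

import Mathlib

namespace MultiCST

/-- The sum `p + q` of ultrafilters on ℕ: `A ∈ p + q` iff `{x : {y : x+y ∈ A} ∈ q} ∈ p`. -/
def uAdd (p q : Ultrafilter ℕ) : Ultrafilter ℕ :=
  p.bind fun x => q.map fun y => x + y

/-- `A ⊆ ℕ` is a J-set. -/
def IsJSet (A : Set ℕ) : Prop :=
  ∀ F : Finset (ℕ → ℕ), F.Nonempty →
    ∃ (a : ℕ) (β : Finset ℕ), β.Nonempty ∧ ∀ f ∈ F, a + ∑ t ∈ β, f t ∈ A

/-- `p ∈ 𝒥`: every member of `p` is a J-set. -/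
def MemJ (p : Ultrafilter ℕ) : Prop := ∀ A : Set ℕ, A ∈ p → IsJSet A

/-- `p` is an idempotent ultrafilter. -/
def IdempotentUF (p : Ultrafilter ℕ) : Prop := uAdd p p = p

/-- `p` is a minimal idempotent ultrafilter. -/
def IsMinimalIdempotent (p : Ultrafilter ℕ) : Prop :=
  IdempotentUF p ∧
    ∀ q : Ultrafilter ℕ, IdempotentUF q → uAdd q p = q → uAdd p q = q → q = p

/-- Tensor product `⊗_{i=1}^m p_i` of ultrafilters on ℕ, as an ultrafilter on `Fin m → ℕ`. -/
def tensor : ∀ m : ℕ, (Fin m → Ultrafilter ℕ) → Ultrafilter (Fin m → ℕ)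
  | 0, _ => pure fun i => i.elim0
  | m + 1, p =>
      (p 0).bind fun x => (tensor m fun i => p i.succ).map fun v => Fin.cons x v

/-- `f : ℕ → ℕ` is (given by) a polynomial with coefficients in ℕ and zero constant term. -/
def IsPolyZeroConst (f : ℕ → ℕ) : Prop :=
  ∃ P : Polynomial ℕ, P.coeff 0 = 0 ∧ ∀ x, f x = P.eval x

/-- The linear combination `a₁·p₁ + a₂·p₂ + ⋯ + a_m·p_m` of ultrafilters on ℕ. -/
def linComb : ∀ m : ℕ, (Fin m → ℕ) → (Fin m → Ultrafilter ℕ) → Ultrafilter ℕ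
  | 0, _, _ => pure 0
  | m + 1, a, p =>
      uAdd ((p 0).map fun x => a 0 * x)
        (linComb m (fun i => a i.succ) fun i => p i.succ)

/-! Both directions rest on sums along finite chains: for `F ⊂ G₁ ⊂ ⋯ ⊂ Gₙ` and `fᵢ ∈ Gᵢ`, the sum
of the terms `α(Gᵢ) + ∑_{t ∈ H(Gᵢ)} fᵢ(t)` is a chain sum above `F`. Since every finite chain
extends to an infinite one, (b) says exactly that `A` contains all vectors whose coordinates are
chain sums along consecutive pieces of a finite chain.

(1) ⇒ (2): for each coordinate the set of chain sums above `F` is a J-set, and it shrinks as `F`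
grows. Adding to a chain sum that ends at `K` one that starts above `K` gives again a chain sum, so
the ultrafilters in `𝒥` containing all these sets form a compact subsemigroup of `βℕ`; it is
nonempty because J-sets are partition regular, by Hales–Jewett. An idempotent of this subsemigroup
for each coordinate gives the tensor product, each coordinate continuing the chain where the
previous one ended.

(2) ⇒ (1): for one idempotent `p` and sets `C(F) ∈ p`, recursion on `F` yields `α(F)` and `H(F)`
for which all chain sums above `F` lie in `C(F)`. Below any `K` there are only finitely many chain
sums, so the sections of `A` at all of them have a large intersection, and the coordinates can be
treated one after another. -/

/-! ### Well-founded choice and combinatorial lines -/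

theorem exists_forall_lt_rel_of_extend {α β : Type*} [Preorder α] [WellFoundedLT α]
    {P : α → β → Prop} {r : α → β → α → β → Prop}
    (extend : ∀ (a : α) (g : Set.Iio a → β), (∀ b : Set.Iio a, P b (g b)) →
      ∃ y, P a y ∧ ∀ b : Set.Iio a, r b (g b) a y) :
    ∃ g : α → β, (∀ a, P a (g a)) ∧ ∀ b a, b < a → r b (g b) a (g a) := by
  choose next hnext hrel using extend
  let g : ∀ a, {y // P a y} := (wellFounded_lt (α := α)).fix fun a g =>
    ⟨next a (fun b => g b b.2) fun b => (g b b.2).2, hnext _ _ _⟩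
  refine ⟨fun a => g a, fun a => (g a).2, fun b a hba => ?_⟩
  have hg : g a = ⟨next a (fun b => g b) fun b => (g b).2, hnext _ _ _⟩ :=
    (wellFounded_lt (α := α)).fix_eq _ a
  change r b (g b) a (g a)
  rw [hg]
  exact hrel a (fun b => g b) (fun b => (g b).2) ⟨b, hba⟩

/-- Injectivity of `e` makes the varying coordinates of the blocks `y ∈ β` occupy distinct places
`e (y, i)`; the constant coordinates are absorbed into `d`. -/
lemma exists_sum_line_eq {α ι κ τ M : Type*} [Nonempty α] [Fintype ι] [AddCommMonoid M]
    (l : Combinatorics.Line α ι) (u : α → τ → M) (e : κ × ι ↪ τ) (a : M) {β : Finset κ}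
    (hβ : β.Nonempty) :
    ∃ (d : M) (γ : Finset τ), γ.Nonempty ∧
      ∀ x, a + ∑ y ∈ β, ∑ i, u (l x i) (e (y, i)) = d + ∑ t ∈ γ, u x t := by
  classical
  obtain ⟨x₀⟩ := ‹Nonempty α›
  let V : Finset ι := {i | l.idxFun i = none}
  have hV : V.Nonempty := l.proper.imp fun i hi => by simpa [V] using hi
  have hvar : ∀ x, ∀ i ∈ V, l x i = x := fun x i hi =>
    l.apply_none x i (by simpa [V] using hi)
  have hconst : ∀ x, ∀ i ∈ Vᶜ, l x i = l x₀ i := fun x i hi => by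
    obtain ⟨z, hz⟩ := Option.ne_none_iff_exists'.1 (show l.idxFun i ≠ none by simpa [V] using hi)
    rw [l.apply_some hz, l.apply_some hz]
  refine ⟨a + ∑ y ∈ β, ∑ i ∈ Vᶜ, u (l x₀ i) (e (y, i)), (β ×ˢ V).map e, (hβ.product hV).map,
    fun x => ?_⟩
  rw [Finset.sum_map, Finset.sum_product, add_assoc, ← Finset.sum_add_distrib]
  congr 1
  refine Finset.sum_congr rfl fun y _ => ?_
  rw [← Finset.sum_compl_add_sum V]
  congr 1
  · exact Finset.sum_congr rfl fun i hi => by rw [hconst x i hi]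
  · exact Finset.sum_congr rfl fun i hi => by rw [hvar x i hi]

/-! ### J-sets and ultrafilters -/

lemma IsJSet.mono {A B : Set ℕ} (hA : IsJSet A) (hAB : A ⊆ B) : IsJSet B := fun F hF =>
  let ⟨a, β, hβ, h⟩ := hA F hF
  ⟨a, β, hβ, fun f hf => hAB (h f hf)⟩

lemma not_isJSet_empty : ¬ IsJSet ∅ := fun h =>
  let ⟨_, _, _, h0⟩ := h {0} (Finset.singleton_nonempty 0)
  h0 0 (Finset.mem_singleton_self 0)

lemma IsJSet.exists_le {A : Set ℕ} (hA : IsJSet A) (N : ℕ) (F : Finset (ℕ → ℕ)) :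
    ∃ (a : ℕ) (β : Finset ℕ), β.Nonempty ∧ (∀ t ∈ β, N ≤ t) ∧ ∀ f ∈ F, a + ∑ t ∈ β, f t ∈ A := by
  classical
  obtain ⟨a, β, hβ, h⟩ := hA (insert 0 (F.image fun f t => f (t + N))) (Finset.insert_nonempty _ _)
  refine ⟨a, β.map (addRightEmbedding N), hβ.map, by simp, fun f hf => ?_⟩
  simpa using h _ (Finset.mem_insert_of_mem (Finset.mem_image_of_mem _ hf))

/-- Colour a word `w` over the alphabet `F` by whether the translated sum of its coordinatewise
evaluation lies in `A`; a monochromatic Hales–Jewett line gives the common `d` and `γ`. -/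
lemma IsJSet.exists_forall_mem_or_forall_mem {A B : Set ℕ} (hAB : IsJSet (A ∪ B))
    {F : Finset (ℕ → ℕ)} (hF : F.Nonempty) :
    ∃ (d : ℕ) (γ : Finset ℕ), γ.Nonempty ∧
      ((∀ f ∈ F, d + ∑ t ∈ γ, f t ∈ A) ∨ ∀ f ∈ F, d + ∑ t ∈ γ, f t ∈ B) := by
  classical
  have : Nonempty F := hF.to_subtype
  obtain ⟨ι, _, hι⟩ := Combinatorics.Line.exists_mono_in_high_dimension F Prop
  obtain ⟨e, he⟩ := exists_injective_nat (ℕ × ι)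
  let eval : (ι → F) → ℕ → ℕ := fun w y => ∑ i, (w i : ℕ → ℕ) (e (y, i))
  obtain ⟨a, β, hβ, hmem⟩ := hAB (Finset.univ.image eval) (Finset.univ_nonempty.image _)
  obtain ⟨l, c, hc⟩ := hι fun w => a + ∑ y ∈ β, eval w y ∈ A
  obtain ⟨d, γ, hγ, hd⟩ := exists_sum_line_eq l (fun f : F => (f : ℕ → ℕ)) ⟨e, he⟩ a hβ
  have hline : ∀ f : F, a + ∑ y ∈ β, eval (l f) y = d + ∑ t ∈ γ, (f : ℕ → ℕ) t := hd
  have hunion : ∀ f : F, d + ∑ t ∈ γ, (f : ℕ → ℕ) t ∈ A ∪ B := fun f =>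
    hline f ▸ hmem _ (Finset.mem_image_of_mem _ (Finset.mem_univ _))
  have hmono : ∀ f : F, (d + ∑ t ∈ γ, (f : ℕ → ℕ) t ∈ A) = c := fun f => hline f ▸ hc f
  refine ⟨d, γ, hγ, ?_⟩
  by_cases hcA : c
  · exact Or.inl fun f hf => (hmono ⟨f, hf⟩).mpr hcA
  · exact Or.inr fun f hf => (hunion ⟨f, hf⟩).resolve_left fun h => hcA ((hmono ⟨f, hf⟩).mp h)

theorem IsJSet.of_union {A B : Set ℕ} (hAB : IsJSet (A ∪ B)) : IsJSet A ∨ IsJSet B := by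
  classical
  by_contra! ⟨hA, hB⟩
  simp only [IsJSet, not_forall] at hA hB
  obtain ⟨FA, hFA, hA⟩ := hA
  obtain ⟨FB, -, hB⟩ := hB
  obtain ⟨d, γ, hγ, h | h⟩ :=
    hAB.exists_forall_mem_or_forall_mem (F := FA ∪ FB) (hFA.mono Finset.subset_union_left)
  · exact hA ⟨d, γ, hγ, fun f hf => h f (Finset.mem_union_left _ hf)⟩
  · exact hB ⟨d, γ, hγ, fun f hf => h f (Finset.mem_union_right _ hf)⟩

theorem exists_ultrafilter_le_of_partitionRegular {α : Type*} {Q : Set α → Prop} (hempty : ¬ Q ∅)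
    (hmono : ∀ ⦃s t⦄, Q s → s ⊆ t → Q t) (hunion : ∀ ⦃s t⦄, Q (s ∪ t) → Q s ∨ Q t)
    {l : Filter α} (hl : ∀ s ∈ l, Q s) :
    ∃ p : Ultrafilter α, ↑p ≤ l ∧ ∀ s ∈ p, Q s := by
  let coLarge : Filter α := Filter.comk (fun s => ¬ Q s) hempty
    (fun _ ht _ hst hs => ht (hmono hs hst)) fun _ hs _ ht h => (hunion h).elim hs ht
  have hne : (l ⊓ coLarge).NeBot := Filter.inf_neBot_iff.2 fun s hs t ht => by
    by_contra hst
    exact ht (hmono (hl s hs) (Set.disjoint_iff_inter_eq_empty.2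
      (Set.not_nonempty_iff_eq_empty.1 hst)).subset_compl_right)
  have hle : ↑(Ultrafilter.of (l ⊓ coLarge)) ≤ l ⊓ coLarge := Ultrafilter.of_le _
  refine ⟨_, hle.trans inf_le_left, fun s hs => ?_⟩
  by_contra hQ
  refine Ultrafilter.compl_notMem_iff.2 hs (hle.trans inf_le_right ?_)
  rwa [Filter.mem_comk, compl_compl]

lemma eventually_uAdd {p q : Ultrafilter ℕ} {P : ℕ → Prop} :
    (∀ᶠ z in uAdd p q, P z) ↔ ∀ᶠ x in p, ∀ᶠ y in q, P (x + y) :=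
  Iff.rfl

lemma eventually_tensor_succ {m : ℕ} {p : Fin (m + 1) → Ultrafilter ℕ}
    {P : (Fin (m + 1) → ℕ) → Prop} :
    (∀ᶠ v in tensor (m + 1) p, P v) ↔
      ∀ᶠ x in p 0, ∀ᶠ v in tensor m fun i => p i.succ, P (Fin.cons x v) :=
  Iff.rfl

lemma MemJ.uAdd {p : Ultrafilter ℕ} (hp : MemJ p) (q : Ultrafilter ℕ) : MemJ (uAdd p q) := by
  intro A hA F hF
  obtain ⟨a, β, hβ, h⟩ := hp _ (eventually_uAdd.1 hA) F hF
  obtain ⟨y, hy⟩ := ((Filter.eventually_all_finset F).2 h).exists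
  exact ⟨a + y, β, hβ, fun f hf => by rw [add_right_comm]; exact hy f hf⟩

lemma isClosed_setOf_memJ : IsClosed {p : Ultrafilter ℕ | MemJ p} := by
  have : {p : Ultrafilter ℕ | MemJ p} = ⋂ (A) (_ : ¬ IsJSet A), {p | Aᶜ ∈ p} := by
    ext p
    simp only [MemJ, Set.mem_ofPred_eq, Set.mem_iInter, Ultrafilter.compl_mem_iff_notMem]
    exact forall_congr' fun A => not_imp_not.symm
  rw [this]
  exact isClosed_iInter fun A => isClosed_iInter fun _ => ultrafilter_isClosed_basic _

section

attribute [local instance] Ultrafilter.addSemigroup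

/-- The ultrafilters in `𝒥` containing every `T i` form a nonempty compact subsemigroup. -/
theorem exists_idempotent_memJ_of_directed {ι : Type*} [Nonempty ι] {T : ι → Set ℕ}
    (hdir : Directed (· ≥ ·) T) (hJ : ∀ i, IsJSet (T i))
    (hadd : ∀ i, ∀ x ∈ T i, ∃ j, ∀ y ∈ T j, x + y ∈ T i) :
    ∃ p : Ultrafilter ℕ, IdempotentUF p ∧ MemJ p ∧ ∀ i, T i ∈ p := by
  let S : Set (Ultrafilter ℕ) := {p | MemJ p} ∩ ⋂ i, {p | T i ∈ p}
  have hS : S.Nonempty := by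
    obtain ⟨p, hpT, hpJ⟩ := exists_ultrafilter_le_of_partitionRegular not_isJSet_empty
      (fun _ _ => IsJSet.mono) (fun _ _ => IsJSet.of_union) (l := ⨅ i, Filter.principal (T i))
      fun s hs => by
        obtain ⟨i, hi⟩ := (Filter.mem_iInf_of_directed (hdir.mono_comp _ fun _ _ h =>
          Filter.principal_mono.2 h) s).1 hs
        exact (hJ i).mono hi
    exact ⟨p, hpJ, Set.mem_iInter.2 fun i =>
      hpT (Filter.mem_iInf_of_mem i (Filter.mem_principal_self _))⟩
  have hclosed : IsClosed S := isClosed_setOf_memJ.inter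
    (isClosed_iInter fun _ => ultrafilter_isClosed_basic _)
  have hsub : ∀ p ∈ S, ∀ q ∈ S, p + q ∈ S := by
    rintro p ⟨hpJ, hpT⟩ q ⟨-, hqT⟩
    rw [Set.mem_iInter] at hpT hqT
    refine ⟨hpJ.uAdd q, Set.mem_iInter.2 fun i => eventually_uAdd.2 ?_⟩
    filter_upwards [hpT i] with x hx
    obtain ⟨j, hj⟩ := hadd i x hx
    exact Filter.mem_of_superset (hqT j) hj
  obtain ⟨p, ⟨hpJ, hpT⟩, hp⟩ := exists_idempotent_in_compact_add_subsemigroup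
    Ultrafilter.continuous_add_left S hS hclosed.isCompact hsub
  exact ⟨p, hp, hpJ, Set.mem_iInter.1 hpT⟩

end

lemma IdempotentUF.eventually_add {p : Ultrafilter ℕ} (hp : IdempotentUF p) {P : ℕ → Prop}
    (hP : ∀ᶠ x in p, P x) : ∀ᶠ x in p, ∀ᶠ y in p, P (x + y) :=
  eventually_uAdd.1 (by rwa [hp])

/-! ### Sums along chains of finite sets -/

instance noMaxOrder_finset {α : Type*} [Infinite α] : NoMaxOrder (Finset α) where
  exists_gt s :=
    let ⟨a, ha⟩ := Infinite.exists_notMem_finset s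
    ⟨s.cons a ha, Finset.ssubset_cons ha⟩

section ChainSum

variable {Y M : Type*}

/-- `ChainSum φ F K x`: the element `x` is a sum `φ G₁ g₁ + ⋯ + φ Gₙ gₙ` with `n ≥ 1`,
`F ⊂ G₁ ⊂ ⋯ ⊂ Gₙ ⊆ K` and `gᵢ ∈ Gᵢ`. The interval is half-open so that sums over `(F, K]` and
`(K, L]` add up to sums over `(F, L]`. -/
inductive ChainSum [Add M] (φ : Finset Y → Y → M) : Finset Y → Finset Y → M → Prop
  | single {F G K : Finset Y} {g : Y} (hFG : F ⊂ G) (hGK : G ⊆ K) (hg : g ∈ G) :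
      ChainSum φ F K (φ G g)
  | cons {F G K : Finset Y} {g : Y} {x : M} (hFG : F ⊂ G) (hg : g ∈ G) (hx : ChainSum φ G K x) :
      ChainSum φ F K (φ G g + x)

/-- The vectors whose successive coordinates are sums, with respect to `φ 0, …, φ (m - 1)`, along
successive pieces of one finite chain above `F`. -/
def chainTuples [Add M] :
    ∀ {m : ℕ}, (Fin m → Finset Y → Y → M) → Finset Y → Set (Fin m → M)
  | 0, _, _ => Set.univ
  | _ + 1, φ, F =>
    {v | ∃ K, ChainSum (φ 0) F K (v 0) ∧ Fin.tail v ∈ chainTuples (fun j => φ j.succ) K}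

section Add

variable [Add M] {φ : Finset Y → Y → M} {F F' K : Finset Y} {x : M}

lemma ChainSum.ssubset (h : ChainSum φ F K x) : F ⊂ K := by
  induction h with
  | single hFG hGK => exact hFG.trans_subset hGK
  | cons hFG _ _ ih => exact hFG.trans ih

lemma ChainSum.anti_left (h : ChainSum φ F K x) (hF : F' ⊆ F) : ChainSum φ F' K x := by
  cases h with
  | single hFG hGK hg => exact single (hF.trans_ssubset hFG) hGK hg
  | cons hFG hg hx => exact cons (hF.trans_ssubset hFG) hg hx

variable (φ F K) in
lemma finite_setOf_chainSum : {x | ChainSum φ F K x}.Finite := by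
  classical
  induction hn : K.card - F.card using Nat.strong_induction_on generalizing F with
  | h n ih =>
    have hstep : ∀ G ∈ K.powerset.filter (F ⊂ ·), ∀ g ∈ G,
        ({φ G g} ∪ (φ G g + ·) '' {x | ChainSum φ G K x}).Finite := fun G hG g _ => by
      rw [Finset.mem_filter, Finset.mem_powerset] at hG
      have hFG := Finset.card_lt_card hG.2
      have hGK := Finset.card_le_card hG.1
      exact (Set.finite_singleton _).union ((ih (K.card - G.card) (by omega) (F := G) rfl).image _)
    refine (Set.Finite.biUnion (Finset.finite_toSet _) fun G hG =>
      Set.Finite.biUnion G.finite_toSet (hstep G hG)).subset fun x hx => ?_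
    simp only [Set.mem_iUnion, Finset.mem_coe, Finset.mem_filter, Finset.mem_powerset]
    cases hx with
    | single hFG hGK hg => exact ⟨_, ⟨hGK, hFG⟩, _, hg, Or.inl rfl⟩
    | cons hFG hg hx => exact ⟨_, ⟨hx.ssubset.1, hFG⟩, _, hg, Or.inr ⟨_, hx, rfl⟩⟩

end Add

lemma ChainSum.add [AddSemigroup M] {φ : Finset Y → Y → M} {F K L : Finset Y} {x y : M}
    (hx : ChainSum φ F K x) (hy : ChainSum φ K L y) : ChainSum φ F L (x + y) := by
  induction hx with
  | single hFG hGK hg => exact cons hFG hg (hy.anti_left hGK)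
  | cons hFG hg _ ih => rw [add_assoc]; exact cons hFG hg (ih hy)

/-- `β 0 < β 1 < ⋯` are nonempty finite sets of indices. -/
structure IsBlockSequence {m : ℕ} (β : Fin m → Finset ℕ) : Prop where
  nonempty : ∀ l, (β l).Nonempty
  lt : ∀ l l', l < l' → ∀ x ∈ β l, ∀ y ∈ β l', x < y

lemma IsBlockSequence.succ {m : ℕ} {β : Fin (m + 1) → Finset ℕ} (h : IsBlockSequence β) :
    IsBlockSequence fun l => β (Fin.succ l) :=
  ⟨fun l => h.nonempty l.succ, fun _ _ hl => h.lt _ _ (Fin.succ_lt_succ_iff.2 hl)⟩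

lemma IsBlockSequence.cons {m N : ℕ} {β : Fin m → Finset ℕ} (h : IsBlockSequence β)
    {β₀ : Finset ℕ} (hβ₀ : β₀.Nonempty) (hN : ∀ i ∈ β₀, i < N) :
    IsBlockSequence (Fin.cons β₀ fun l => (β l).map (addRightEmbedding N) :
      Fin (m + 1) → Finset ℕ) := by
  refine ⟨Fin.cases hβ₀ fun l => (h.nonempty l).map, fun l l' hl x hx y hy => ?_⟩
  cases l' using Fin.cases with
  | zero => exact absurd hl (Fin.not_lt_zero l)
  | succ l' =>
    obtain ⟨y, hyl, rfl⟩ := Finset.mem_map.1 hy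
    cases l using Fin.cases with
    | zero => exact (hN x hx).trans_le (Nat.le_add_left N y)
    | succ l =>
      obtain ⟨x, hxl, rfl⟩ := Finset.mem_map.1 hx
      exact Nat.add_lt_add_right (h.lt l l' (Fin.succ_lt_succ_iff.1 hl) x hxl y hyl) N

/-- `z` lists the pairs `(Gᵢ, fᵢ)` of an infinite chain `F ⊂ G₀ ⊂ G₁ ⊂ ⋯` with `fᵢ ∈ Gᵢ`. -/
structure IsChainAbove (F : Finset Y) (z : ℕ → Finset Y × Y) : Prop where
  strictMono : StrictMono fun i => (z i).1
  ssubset : F ⊂ (z 0).1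
  mem : ∀ i, (z i).2 ∈ (z i).1

lemma exists_isChainAbove [Infinite Y] (F : Finset Y) : ∃ z, IsChainAbove F z := by
  obtain ⟨G, hG, hG0⟩ := Nat.exists_strictMono' F
  have hne : ∀ i, (G (i + 1)).Nonempty := fun i =>
    Finset.empty_ssubset.1 ((Finset.empty_subset _).trans_ssubset (hG i.lt_succ_self))
  choose f hf using hne
  exact ⟨fun i => (G (i + 1), f i), fun i j hij => hG (Nat.add_lt_add_right hij 1),
    hG0 ▸ hG Nat.zero_lt_one, hf⟩

lemma IsChainAbove.cons {F G : Finset Y} {g : Y} {z : ℕ → Finset Y × Y} (hz : IsChainAbove G z)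
    (hFG : F ⊂ G) (hg : g ∈ G) :
    IsChainAbove F (fun i => Nat.casesOn i (G, g) z : ℕ → Finset Y × Y) := by
  refine ⟨strictMono_nat_of_lt_succ fun i => ?_, hFG, fun i => ?_⟩
  · cases i with
    | zero => exact hz.ssubset
    | succ i => exact hz.strictMono i.lt_succ_self
  · cases i with
    | zero => exact hg
    | succ i => exact hz.mem i

lemma IsChainAbove.anti {F G : Finset Y} {z : ℕ → Finset Y × Y} (hz : IsChainAbove G z)
    (hFG : F ⊆ G) : IsChainAbove F z :=
  ⟨hz.strictMono, hFG.trans_ssubset hz.ssubset, hz.mem⟩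

variable [AddCommMonoid M] {m : ℕ}

lemma ChainSum.exists_isChainAbove_prepend {φ : Finset Y → Y → M} {F K : Finset Y} {x : M}
    (hx : ChainSum φ F K x) {z : ℕ → Finset Y × Y} (hz : IsChainAbove K z) :
    ∃ z', IsChainAbove F z' ∧ ∃ (N : ℕ) (β : Finset ℕ), β.Nonempty ∧ (∀ i ∈ β, i < N) ∧
      ∑ i ∈ β, φ (z' i).1 (z' i).2 = x ∧ ∀ i, z' (i + N) = z i := by
  induction hx with
  | single hFG hGK hg =>
    exact ⟨_, (hz.anti hGK).cons hFG hg, 1, {0}, Finset.singleton_nonempty 0, by simp, by simp,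
      fun _ => rfl⟩
  | cons hFG hg _ ih =>
    obtain ⟨z', hz', N, β, -, hN, hsum, hshift⟩ := ih hz
    refine ⟨_, hz'.cons hFG hg, N + 1, insert 0 (β.map (addRightEmbedding 1)),
      Finset.insert_nonempty _ _, ?_, ?_, hshift⟩
    · simpa using hN
    · rw [Finset.sum_insert (by simp), Finset.sum_map]
      exact congrArg _ hsum

lemma exists_isChainAbove_of_mem_chainTuples [Infinite Y] {φ : Fin m → Finset Y → Y → M}
    {F : Finset Y} {v : Fin m → M} (hv : v ∈ chainTuples φ F) :
    ∃ z, IsChainAbove F z ∧ ∃ β : Fin m → Finset ℕ, IsBlockSequence β ∧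
      ∀ l, ∑ i ∈ β l, φ l (z i).1 (z i).2 = v l := by
  induction m generalizing F with
  | zero =>
    obtain ⟨z, hz⟩ := exists_isChainAbove F
    exact ⟨z, hz, nofun, ⟨nofun, nofun⟩, nofun⟩
  | succ m ih =>
    obtain ⟨K, hv0, hvtail⟩ := hv
    obtain ⟨z, hz, β, hβ, hsum⟩ := ih hvtail
    obtain ⟨z', hz', N, β₀, hβ₀, hN, hsum₀, hshift⟩ := hv0.exists_isChainAbove_prepend hz
    refine ⟨z', hz', _, hβ.cons hβ₀ hN, Fin.cases hsum₀ fun l => ?_⟩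
    simp only [Fin.cons_succ, Finset.sum_map, addRightEmbedding_apply, hshift]
    exact hsum l

lemma chainSum_sum {φ : Finset Y → Y → M} {G : ℕ → Finset Y} (hG : StrictMono G) {f : ℕ → Y}
    (hf : ∀ i, f i ∈ G i) {β : Finset ℕ} (hβ : β.Nonempty) {N : ℕ} (hN : ∀ i ∈ β, i ≤ N)
    {F : Finset Y} (hF : ∀ i ∈ β, F ⊂ G i) :
    ChainSum φ F (G N) (∑ i ∈ β, φ (G i) (f i)) := by
  induction β using Finset.induction_on_min generalizing F with
  | empty => exact absurd hβ Finset.not_nonempty_empty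
  | insert a β ha ih =>
    rw [Finset.forall_mem_insert] at hN hF
    rcases β.eq_empty_or_nonempty with rfl | hne
    · simpa using ChainSum.single hF.1 (hG.monotone hN.1) (hf a)
    · rw [Finset.sum_insert fun h => (ha a h).false]
      exact .cons hF.1 (hf a) (ih hne hN.2 fun i hi => hG (ha i hi))

lemma sum_mem_chainTuples {φ : Fin m → Finset Y → Y → M} {G : ℕ → Finset Y} (hG : StrictMono G)
    {f : ℕ → Y} (hf : ∀ i, f i ∈ G i) {β : Fin m → Finset ℕ} (hβ : IsBlockSequence β)
    {F : Finset Y} (hF : ∀ l, ∀ i ∈ β l, F ⊂ G i) :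
    (fun l => ∑ i ∈ β l, φ l (G i) (f i)) ∈ chainTuples φ F := by
  induction m generalizing F with
  | zero => trivial
  | succ m ih =>
    let N := (β 0).max' (hβ.nonempty 0)
    refine ⟨G N, chainSum_sum hG hf (hβ.nonempty 0) (fun i hi => (β 0).le_max' i hi) (hF 0),
      ih hβ.succ fun l i hi => hG ?_⟩
    exact hβ.lt 0 l.succ l.succ_pos N (Finset.max'_mem _ _) i hi

theorem chainTuples_empty_subset_iff [Infinite Y] {φ : Fin m → Finset Y → Y → M}
    {A : Set (Fin m → M)} :
    chainTuples φ ∅ ⊆ A ↔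
      ∀ G : ℕ → Finset Y, (∀ i, (G i).Nonempty) → (∀ i j, i < j → G i ⊂ G j) →
        ∀ f : ℕ → Y, (∀ i, f i ∈ G i) →
        ∀ β : Fin m → Finset ℕ, (∀ l, (β l).Nonempty) →
          (∀ l l' : Fin m, l < l' → ∀ x ∈ β l, ∀ y ∈ β l', x < y) →
          (fun l => ∑ i ∈ β l, φ l (G i) (f i)) ∈ A := by
  constructor
  · intro hA G hne hG f hf β hβne hβlt
    exact hA (sum_mem_chainTuples hG hf ⟨hβne, hβlt⟩ fun _ i _ => Finset.empty_ssubset.2 (hne i))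
  · intro hA v hv
    obtain ⟨z, hz, β, hβ, hsum⟩ := exists_isChainAbove_of_mem_chainTuples hv
    rw [← funext hsum]
    exact hA _ (fun i => ⟨_, hz.mem i⟩) hz.strictMono _ hz.mem β hβ.nonempty hβ.lt

end ChainSum

/-! ### From chain sums to ultrafilters -/

/-- The term `α(G) + ∑_{t ∈ H(G)} f(t)` of the sums in the theorem. -/
def shiftedSum (a : Finset (ℕ → ℕ) → ℕ) (h : Finset (ℕ → ℕ) → Finset ℕ) (G : Finset (ℕ → ℕ))
    (f : ℕ → ℕ) : ℕ :=
  a G + ∑ t ∈ h G, f t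

theorem exists_idempotent_memJ_chainSum_mem {a : Finset (ℕ → ℕ) → ℕ}
    {h : Finset (ℕ → ℕ) → Finset ℕ} (hne : ∀ F, F.Nonempty → (h F).Nonempty) :
    ∃ p : Ultrafilter ℕ, IdempotentUF p ∧ MemJ p ∧
      ∀ F, ∀ᶠ x in p, ∃ K, ChainSum (shiftedSum a h) F K x := by
  classical
  refine exists_idempotent_memJ_of_directed (T := fun F => {x | ∃ K, ChainSum _ F K x})
    (Antitone.directed_ge fun F F' hF x ⟨K, hx⟩ => ⟨K, hx.anti_left hF⟩) (fun F L hL => ?_) ?_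
  · obtain ⟨G, hG⟩ := exists_gt (F ∪ L)
    have hFG : F ⊂ G := Finset.subset_union_left.trans_ssubset hG
    have hLG : L ⊆ G := Finset.subset_union_right.trans hG.1
    exact ⟨a G, h G, hne G (hL.mono hLG), fun f hf => ⟨G, .single hFG subset_rfl (hLG hf)⟩⟩
  · rintro F x ⟨K, hx⟩
    exact ⟨K, fun y ⟨L, hy⟩ => ⟨L, hx.add hy⟩⟩

theorem chainTuples_mem_tensor {Y : Type*} {m : ℕ} {φ : Fin m → Finset Y → Y → ℕ}
    {p : Fin m → Ultrafilter ℕ} (hp : ∀ j F, ∀ᶠ x in p j, ∃ K, ChainSum (φ j) F K x)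
    (F : Finset Y) : chainTuples φ F ∈ tensor m p := by
  induction m generalizing F with
  | zero => exact Filter.univ_mem
  | succ m ih =>
    refine eventually_tensor_succ.2 ?_
    filter_upwards [hp 0 F] with x ⟨K, hx⟩
    filter_upwards [ih (fun j => hp j.succ) K] with v hv
    exact ⟨K, hx, hv⟩

/-! ### From ultrafilters to chain sums -/

lemma exists_forall_shift_mem {p : Ultrafilter ℕ} (hp : IdempotentUF p) (hJ : MemJ p) {ι : Type*}
    [Finite ι] {E : ι → Set ℕ} (hE : ∀ i, E i ∈ p) (N : ℕ) (G : Finset (ℕ → ℕ)) :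
    ∃ (a : ℕ) (β : Finset ℕ), β.Nonempty ∧ (∀ t ∈ β, N ≤ t) ∧ ∀ i, ∀ g ∈ G,
      a + ∑ t ∈ β, g t ∈ E i ∧ ∀ᶠ y in p, a + ∑ t ∈ β, g t + y ∈ E i := by
  have hlarge : ∀ᶠ x in p, ∀ i, x ∈ E i ∧ ∀ᶠ y in p, x + y ∈ E i :=
    Filter.eventually_all.2 fun i => Filter.Eventually.and (hE i) (hp.eventually_add (hE i))
  obtain ⟨a, β, hβ, hN, h⟩ := (hJ _ hlarge).exists_le N G
  exact ⟨a, β, hβ, hN, fun i g hg => h g hg i⟩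

/-- Besides `a G` and `h G` one chooses `E G ∈ p`, a set to which the sums along chains above `G`
are confined: the next term `y` lies in every earlier `E F`, and `y + E G ⊆ E F`. -/
theorem exists_chainSum_mem {p : Ultrafilter ℕ} (hp : IdempotentUF p) (hJ : MemJ p)
    {C : Finset (ℕ → ℕ) → Set ℕ} (hC : ∀ F, C F ∈ p) :
    ∃ (a : Finset (ℕ → ℕ) → ℕ) (h : Finset (ℕ → ℕ) → Finset ℕ), (∀ F, (h F).Nonempty) ∧
      (∀ F G, F ⊂ G → ∀ s ∈ h F, ∀ t ∈ h G, s < t) ∧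
      ∀ F K x, ChainSum (shiftedSum a h) F K x → x ∈ C F := by
  classical
  obtain ⟨c, hc, hrel⟩ := exists_forall_lt_rel_of_extend (α := Finset (ℕ → ℕ))
    (β := ℕ × Finset ℕ × Set ℕ)
    (P := fun G (_, β, E) => β.Nonempty ∧ E ∈ p ∧ E ⊆ C G)
    (r := fun _ (_, β, E) G (a', β', E') => (∀ s ∈ β, ∀ t ∈ β', s < t) ∧
      ∀ g ∈ G, a' + ∑ t ∈ β', g t ∈ E ∧ ∀ x ∈ E', a' + ∑ t ∈ β', g t + x ∈ E)
    fun G c hc => by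
      have : Finite (Set.Iio G) := (Set.finite_Iio G).to_subtype
      obtain ⟨N, hN⟩ : BddAbove (⋃ F : Set.Iio G, ((c F).2.1 : Set ℕ)) :=
        (Set.finite_iUnion fun F => (c F).2.1.finite_toSet).bddAbove
      obtain ⟨a, β, hβ, hlt, hmem⟩ := exists_forall_shift_mem hp hJ (fun F => (hc F).2.1) (N + 1) G
      refine ⟨(a, β, {x | x ∈ C G ∧ ∀ F, ∀ g ∈ G, a + ∑ t ∈ β, g t + x ∈ (c F).2.2}),
        ⟨hβ, ?_, fun x hx => hx.1⟩, fun F => ⟨fun s hs t ht => ?_, fun g hg => ?_⟩⟩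
      · exact Filter.Eventually.and (hC G) <| Filter.eventually_all.2 fun F =>
          (Filter.eventually_all_finset G).2 fun g hg => (hmem F g hg).2
      · exact (hN (Set.mem_iUnion_of_mem F hs)).trans_lt (hlt t ht)
      · exact ⟨(hmem F g hg).1, fun x hx => hx.2 F g hg⟩
  refine ⟨fun F => (c F).1, fun F => (c F).2.1, fun F => (hc F).1,
    fun F G hFG => (hrel F G hFG).1, fun F K x hx => (hc F).2.2 ?_⟩
  induction hx with
  | single hFG _ hg => exact ((hrel _ _ hFG).2 _ hg).1
  | cons hFG hg _ ih => exact ((hrel _ _ hFG).2 _ hg).2 _ ih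

lemma eventually_forall_chainSum {β Y M : Type*} [Add M] {φ : Finset Y → Y → M}
    {l : Filter β} {Q : Finset Y → M → β → Prop} (K : Finset Y)
    (hQ : ∀ F x, ChainSum φ F K x → ∀ᶠ v in l, Q F x v) :
    ∀ᶠ v in l, ∀ F x, ChainSum φ F K x → Q F x v := by
  classical
  have hfin : ∀ᶠ v in l, ∀ F ∈ Set.Iio K, ∀ x ∈ {x | ChainSum φ F K x}, Q F x v :=
    (Filter.eventually_all_finite (Set.finite_Iio K)).2 fun F _ =>
      (Filter.eventually_all_finite (finite_setOf_chainSum φ F K)).2 (hQ F)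
  exact hfin.mono fun v hv F x hx => hv F hx.ssubset x hx

/-- The first coordinate is constructed first. The remaining coordinates are then constructed for
the family of sets `{v | (x, v) ∈ A F for all first coordinates x along chains from F to K}`,
which are large because there are only finitely many such `F` and `x`. -/
theorem exists_chainTuples_subset {m : ℕ} {p : Fin m → Ultrafilter ℕ}
    (hp : ∀ i, IdempotentUF (p i)) (hJ : ∀ i, MemJ (p i))
    {A : Finset (ℕ → ℕ) → Set (Fin m → ℕ)} (hA : ∀ F, A F ∈ tensor m p) :
    ∃ (α : Fin m → Finset (ℕ → ℕ) → ℕ) (H : Fin m → Finset (ℕ → ℕ) → Finset ℕ),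
      (∀ j F, (H j F).Nonempty) ∧ (∀ j F G, F ⊂ G → ∀ s ∈ H j F, ∀ t ∈ H j G, s < t) ∧
      ∀ F, chainTuples (fun j => shiftedSum (α j) (H j)) F ⊆ A F := by
  induction m with
  | zero =>
    refine ⟨nofun, nofun, nofun, nofun, fun F v _ => ?_⟩
    obtain ⟨w, hw⟩ := Filter.nonempty_of_mem (hA F)
    rwa [Subsingleton.elim v w]
  | succ m ih =>
    obtain ⟨a, h, hne, hlt, hmem⟩ :=
      exists_chainSum_mem (hp 0) (hJ 0) fun F => eventually_tensor_succ.1 (hA F)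
    obtain ⟨α, H, hne', hlt', hsub⟩ := ih (fun i => hp i.succ) (fun i => hJ i.succ)
      fun K => eventually_forall_chainSum K fun F x => hmem F K x
    refine ⟨Fin.cons a α, Fin.cons h H, Fin.cases hne hne', Fin.cases hlt hlt',
      fun F v ⟨K, hv0, hvtail⟩ => ?_⟩
    rw [← Fin.cons_self_tail v]
    exact hsub K hvtail F (v 0) hv0

/-- Multidimensional Stronger Central Sets Theorem II (infinitary form). -/
theorem multidimensional_stronger_CST_II_infinitary (m : ℕ) (hm : 1 ≤ m)
    (A : Set (Fin m → ℕ)) :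
    (∃ (α : Fin m → Finset (ℕ → ℕ) → ℕ) (H : Fin m → Finset (ℕ → ℕ) → Finset ℕ),
      (∀ (j : Fin m) (F : Finset (ℕ → ℕ)), F.Nonempty → (H j F).Nonempty) ∧
      (∀ (j : Fin m) (F G : Finset (ℕ → ℕ)), F.Nonempty → F ⊂ G →
        ∀ x ∈ H j F, ∀ y ∈ H j G, x < y) ∧
      (∀ G : ℕ → Finset (ℕ → ℕ),
        (∀ i, (G i).Nonempty) → (∀ i j, i < j → G i ⊂ G j) →
        ∀ f : ℕ → ℕ → ℕ, (∀ i, f i ∈ G i) →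
        ∀ β : Fin m → Finset ℕ,
          (∀ l, (β l).Nonempty) →
          (∀ l l' : Fin m, l < l' → ∀ x ∈ β l, ∀ y ∈ β l', x < y) →
          (fun l => ∑ i ∈ β l, (α l (G i) + ∑ t ∈ H l (G i), f i t)) ∈ A))
    ↔
    (∃ p : Fin m → Ultrafilter ℕ,
      (∀ i, IdempotentUF (p i)) ∧ (∀ i, MemJ (p i)) ∧ A ∈ tensor m p) := by
  constructor
  · rintro ⟨α, H, hne, -, hA⟩
    choose p hp hJ hmem using fun j => exists_idempotent_memJ_chainSum_mem (a := α j) (hne j)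
    exact ⟨p, hp, hJ, Filter.mem_of_superset (chainTuples_mem_tensor hmem ∅)
      (chainTuples_empty_subset_iff.2 hA)⟩
  · rintro ⟨p, hp, hJ, hA⟩
    obtain ⟨α, H, hne, hlt, hsub⟩ := exists_chainTuples_subset hp hJ fun _ => hA
    exact ⟨α, H, fun j F _ => hne j F, fun j F G _ => hlt j F G,
      chainTuples_empty_subset_iff.1 (hsub ∅)⟩

end MultiCST
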